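/- Let R be the quotient of ℂ⟨e1,e2,e3⟩ by the two-sided ideal generated by e1e2 − e2e1 − e2, e1e3 − e3e1, e2e3 − e3e2, e2², and e3². Then h_0 = 1 and h_n = 2 for every n ≥ 1; equivalently, the Poincaré series Σ_{n≥0} h_n z^n equals (1+z)/(1−z). -/

import Mathlib

open CategoryTheory FreeAlgebra

/-- `Ext^m_R(ℂ,ℂ)` as a ℂ-module, where `ℂ` is an `R`-module via the augmentation `ε`. -/
noncomputable def extC (R : Type) [Ring R] [Algebra ℂ R] (ε : R →ₐ[ℂ] ℂ) (m : ℕ) :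
    ModuleCat ℂ :=
  letI : Module R ℂ := Module.compHom ℂ ε.toRingHom
  ((Ext ℂ (ModuleCat R) m).obj (Opposite.op (ModuleCat.of R ℂ))).obj (ModuleCat.of R ℂ)

/-- `h_m = dim_ℂ Ext^m_R(ℂ,ℂ)`. -/
noncomputable def extDim (R : Type) [Ring R] [Algebra ℂ R] (ε : R →ₐ[ℂ] ℂ) (m : ℕ) : ℕ :=
  Module.finrank ℂ (extC R ε m)

/-- Relations: `e1e2 - e2e1 = e2`, `e1e3 - e3e1 = 0`, `e2e3 - e3e2 = 0`, `e2² = 0`, `e3² = 0`. -/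
inductive CRel : FreeAlgebra ℂ (Fin 3) → FreeAlgebra ℂ (Fin 3) → Prop
  | r12 : CRel (ι ℂ 0 * ι ℂ 1 - ι ℂ 1 * ι ℂ 0) (ι ℂ 1)
  | r13 : CRel (ι ℂ 0 * ι ℂ 2 - ι ℂ 2 * ι ℂ 0) 0
  | r23 : CRel (ι ℂ 1 * ι ℂ 2 - ι ℂ 2 * ι ℂ 1) 0
  | r22 : CRel (ι ℂ 1 * ι ℂ 1) 0
  | r33 : CRel (ι ℂ 2 * ι ℂ 2) 0

/-!
`R` is an Ore extension by `e₁` of `Λ = ℂ[e₂, e₃] / (e₂², e₃²)`, hence a free right `ℂ[e₁]`-module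
with basis `1, e₂, e₃, e₂ e₃`. Over `Λ`, the tensor product of the periodic resolutions given by
`e₂` and `e₃` resolves `ℂ`; its basis elements of degree `i` in `e₂` have `e₁`-weight `i`. Extend
scalars to `R` and take the cone of right multiplication by `e₁ - i` on these basis elements: this
is a free resolution of `ℂ` over `R`, because right multiplication by `e₁ - i` is injective on `R`
and reducing modulo its image gives the `Λ`-complex back.

Applied to the resolution, `Hom_R(-, ℂ)` kills `e₂` and `e₃` and turns `e₁ - i` into `-i`, so only
the basis elements of weight `0` contribute. Each degree of the Koszul complex has one of them, and
the cone counts it in two consecutive degrees, which gives `(1 + z) · 1 / (1 - z)`.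
-/


namespace ColorAlgebra

/-! ### Cohomology from a resolution -/

section Resolutions

open Limits

universe u v w

lemma quasiIso_toSingle₀ {C : Type*} [Category* C] [Abelian C] (K : ChainComplex C ℕ) {Z : C}
    (π : K.X 0 ⟶ Z) (hπ : K.d 1 0 ≫ π = 0) (epi : Epi π)
    (exact_zero : (ShortComplex.mk _ _ hπ).Exact)
    (exact_succ : ∀ n, (ShortComplex.mk _ _ (K.d_comp_d (n + 2) (n + 1) n)).Exact) :
    QuasiIso ((K.toSingle₀Equiv Z).symm ⟨π, hπ⟩) := by
  refine ⟨fun n => ?_⟩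
  cases n with
  | zero =>
    rw [ChainComplex.quasiIsoAt₀_iff, ShortComplex.quasiIso_iff_of_zeros' _ (K.shape _ _ (by simp))
      rfl rfl]
    refine (ShortComplex.exact_and_epi_g_iff_of_iso ?_).2 ⟨exact_zero, epi⟩
    refine ShortComplex.isoMk (Iso.refl _) (Iso.refl _) (Iso.refl _) ?_ ?_
    · exact (Category.id_comp _).trans (Category.comp_id _).symm
    · exact (Category.id_comp _).trans ((Category.comp_id _).trans
        (ChainComplex.toSingle₀Equiv_symm_apply_f_zero π hπ)).symm
  | succ n =>
    rw [quasiIsoAt_iff_exactAt' (hL := ChainComplex.exactAt_succ_single_obj ..),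
      HomologicalComplex.exactAt_iff' _ (n + 2) (n + 1) n (by simp) (by simp)]
    exact exact_succ n

section ModuleResolution

variable {A : Type u} [Ring A] {P : ℕ → Type v} [∀ n, AddCommGroup (P n)] [∀ n, Module A (P n)]
  (d : ∀ n, P (n + 1) →ₗ[A] P n) (exact_succ : ∀ n, Function.Exact (d (n + 1)) (d n))

/-- An exact sequence of modules `⋯ → P 1 → P 0`, packaged as a chain complex. -/
noncomputable def chainComplexOfExact : ChainComplex (ModuleCat.{v} A) ℕ :=
  ChainComplex.of (fun n => ModuleCat.of A (P n)) (fun n => ModuleCat.ofHom (d n)) fun n =>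
    ModuleCat.hom_ext (exact_succ n).linearMap_comp_eq_zero

lemma chainComplexOfExact_d (n : ℕ) :
    (chainComplexOfExact d exact_succ).d (n + 1) n = ModuleCat.ofHom (d n) :=
  ChainComplex.of_d (fun n => ModuleCat.of A (P n)) (fun n => ModuleCat.ofHom (d n)) n

lemma chainComplexOfExact_d_comp_eq_iff {N : Type v} [AddCommGroup N] [Module A N] {n : ℕ}
    (f : P n →ₗ[A] N) (g : P (n + 1) →ₗ[A] N) :
    (chainComplexOfExact d exact_succ).d (n + 1) n ≫ ModuleCat.ofHom f = ModuleCat.ofHom g ↔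
      f ∘ₗ d n = g := by
  rw [chainComplexOfExact_d]
  exact ModuleCat.hom_ext_iff

variable {M : Type v} [AddCommGroup M] [Module A M] (π : P 0 →ₗ[A] M)

/-- An exact sequence of modules `⋯ → P 1 → P 0 → M → 0` with projective terms `P n`, packaged as a
projective resolution of `M`. -/
noncomputable def projectiveResolutionOfExact [∀ n, Module.Projective A (P n)]
    (exact_zero : Function.Exact (d 0) π) (surjective : Function.Surjective π) :
    ProjectiveResolution (ModuleCat.of A M) where
  complex := chainComplexOfExact d exact_succ
  projective n := (ModuleCat.of A (P n)).projective_of_categoryTheory_projective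
  π := ((chainComplexOfExact d exact_succ).toSingle₀Equiv _).symm
    ⟨ModuleCat.ofHom π, by
      rw [chainComplexOfExact_d]
      exact ModuleCat.hom_ext exact_zero.linearMap_comp_eq_zero⟩
  quasiIso := by
    refine quasiIso_toSingle₀ (chainComplexOfExact d exact_succ) (ModuleCat.ofHom π) _
      ((ModuleCat.epi_iff_surjective _).2 surjective) ?_ fun n => ?_
    · simp only [chainComplexOfExact_d]
      exact ModuleCat.shortComplex_exact _ exact_zero
    · simp only [chainComplexOfExact_d]
      exact ModuleCat.shortComplex_exact _ (exact_succ n)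

end ModuleResolution

lemma finrank_homology_eq {k : Type u} [Ring k] (S : ShortComplex (ModuleCat.{v} k))
    {W : Type w} [AddCommGroup W] [Module k W] (φ : S.X₂ →ₗ[k] W)
    (exists_cycle : ∀ w, ∃ c, S.g c = 0 ∧ φ c = w)
    (boundary_iff : ∀ c, S.g c = 0 → ((∃ b, S.f b = c) ↔ φ c = 0)) :
    Module.finrank k S.homology = Module.finrank k W := by
  let φZ : LinearMap.ker S.g.hom →ₗ[k] W := φ.domRestrict _
  have φZ_surjective : Function.Surjective φZ := fun w =>
    let ⟨c, hc, hw⟩ := exists_cycle w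
    ⟨⟨c, hc⟩, hw⟩
  have range_eq_ker : LinearMap.range S.moduleCatToCycles = LinearMap.ker φZ := by
    ext ⟨c, hc⟩
    exact (exists_congr fun b => Subtype.ext_iff).trans (boundary_iff c hc)
  exact (S.moduleCatHomologyIso.toLinearEquiv ≪≫ₗ Submodule.quotEquivOfEq _ _ range_eq_ker ≪≫ₗ
    φZ.quotKerEquivOfSurjective φZ_surjective).finrank_eq

lemma finrank_ext_eq {k : Type u} [Ring k] {C : Type*} [Category.{v} C] [Abelian C] [Linear k C]
    [EnoughProjectives C] {X Y : C} (P : ProjectiveResolution X) {m n : ℕ}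
    (hm : (ComplexShape.up ℕ).prev n = m) {W : Type w} [AddCommGroup W] [Module k W]
    (φ : (P.complex.X n ⟶ Y) →ₗ[k] W)
    (exists_cocycle : ∀ w, ∃ f, P.complex.d (n + 1) n ≫ f = 0 ∧ φ f = w)
    (coboundary_iff : ∀ f, P.complex.d (n + 1) n ≫ f = 0 →
      ((∃ g, P.complex.d n m ≫ g = f) ↔ φ f = 0)) :
    Module.finrank k (((Ext k C n).obj (Opposite.op X)).obj Y) = Module.finrank k W := by
  let L := P.complex.linearYonedaObj k Y
  have ext_iso : ((Ext k C n).obj (Opposite.op X)).obj Y ≅ (L.sc' m n (n + 1)).homology :=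
    P.isoExt n Y ≪≫ ShortComplex.homologyMapIso (L.isoSc' m n (n + 1) hm (by simp))
  rw [ext_iso.toLinearEquiv.finrank_eq]
  exact finrank_homology_eq (L.sc' m n (n + 1)) φ exists_cocycle coboundary_iff

section ModuleExt

variable {k : Type*} [Ring k] {A : Type u} [Ring A] [Small.{v} A] [Linear k (ModuleCat.{v} A)]
  {P : ℕ → Type v} [∀ n, AddCommGroup (P n)] [∀ n, Module A (P n)]
  [∀ n, Module.Projective A (P n)] {d : ∀ n, P (n + 1) →ₗ[A] P n} {M N : Type v} [AddCommGroup M]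
  [Module A M] [AddCommGroup N] [Module A N] {π : P 0 →ₗ[A] M} {W : Type w} [AddCommGroup W]
  [Module k W]

lemma finrank_ext_zero_eq_of_exact (exact_succ : ∀ n, Function.Exact (d (n + 1)) (d n))
    (exact_zero : Function.Exact (d 0) π) (surjective : Function.Surjective π)
    (φ : (ModuleCat.of A (P 0) ⟶ ModuleCat.of A N) →ₗ[k] W)
    (exists_cocycle : ∀ w, ∃ f, f ∘ₗ d 0 = 0 ∧ φ (ModuleCat.ofHom f) = w)
    (eq_zero : ∀ f, f ∘ₗ d 0 = 0 → φ (ModuleCat.ofHom f) = 0 → f = 0) :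
    Module.finrank k (((Ext k (ModuleCat A) 0).obj (Opposite.op (ModuleCat.of A M))).obj
      (ModuleCat.of A N)) = Module.finrank k W := by
  let K := projectiveResolutionOfExact d exact_succ π exact_zero surjective
  refine finrank_ext_eq K CochainComplex.prev_nat_zero φ (fun w => ?_) fun f hf => ?_
  · obtain ⟨f, hf, hw⟩ := exists_cocycle w
    exact ⟨ModuleCat.ofHom f, (chainComplexOfExact_d_comp_eq_iff d exact_succ f 0).2 hf, hw⟩
  · rw [K.complex.shape 0 0 (by simp)]
    refine ⟨fun ⟨g, hg⟩ => by rw [← hg, zero_comp]; exact map_zero φ, fun h => ⟨0, ?_⟩⟩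
    rw [comp_zero]
    exact (ModuleCat.hom_ext (eq_zero f.hom
      ((chainComplexOfExact_d_comp_eq_iff d exact_succ f.hom 0).1 hf) h)).symm

lemma finrank_ext_succ_eq_of_exact (exact_succ : ∀ n, Function.Exact (d (n + 1)) (d n))
    (exact_zero : Function.Exact (d 0) π) (surjective : Function.Surjective π) (n : ℕ)
    (φ : (ModuleCat.of A (P (n + 1)) ⟶ ModuleCat.of A N) →ₗ[k] W)
    (exists_cocycle : ∀ w, ∃ f, f ∘ₗ d (n + 1) = 0 ∧ φ (ModuleCat.ofHom f) = w)
    (coboundary_iff : ∀ f, f ∘ₗ d (n + 1) = 0 →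
      ((∃ g, g ∘ₗ d n = f) ↔ φ (ModuleCat.ofHom f) = 0)) :
    Module.finrank k (((Ext k (ModuleCat A) (n + 1)).obj (Opposite.op (ModuleCat.of A M))).obj
      (ModuleCat.of A N)) = Module.finrank k W := by
  let K := projectiveResolutionOfExact d exact_succ π exact_zero surjective
  refine finrank_ext_eq K (CochainComplex.prev_nat_succ n) φ (fun w => ?_) fun f hf => ?_
  · obtain ⟨f, hf, hw⟩ := exists_cocycle w
    exact ⟨ModuleCat.ofHom f, (chainComplexOfExact_d_comp_eq_iff d exact_succ f 0).2 hf, hw⟩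
  · refine Iff.trans ?_
      (coboundary_iff f.hom ((chainComplexOfExact_d_comp_eq_iff d exact_succ f.hom 0).1 hf))
    exact ⟨fun ⟨g, hg⟩ => ⟨g.hom, (chainComplexOfExact_d_comp_eq_iff d exact_succ _ _).1 hg⟩,
      fun ⟨g, hg⟩ => ⟨ModuleCat.ofHom g, (chainComplexOfExact_d_comp_eq_iff d exact_succ _ _).2 hg⟩⟩

end ModuleExt

end Resolutions

section TrivialModule

variable {k A : Type*} [Field k] [Ring A] [Algebra k A]

/-- The field `k` as a module over the augmented algebra `ε : A →ₐ[k] k`. This is a type synonym, so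
that the action of `A` can be found by instance search. -/
def TrivialModule (_ε : A →ₐ[k] k) : Type _ := k

namespace TrivialModule

variable (ε : A →ₐ[k] k)

noncomputable instance : AddCommGroup (TrivialModule ε) := inferInstanceAs (AddCommGroup k)

noncomputable instance : Module k (TrivialModule ε) := inferInstanceAs (Module k k)

noncomputable instance : Module A (TrivialModule ε) := Module.compHom k ε.toRingHom

instance : Module.Finite k (TrivialModule ε) := inferInstanceAs (Module.Finite k k)

lemma finrank_eq_one : Module.finrank k (TrivialModule ε) = 1 := Module.finrank_self k

variable {ε}

lemma smul_eq (a : A) (t : TrivialModule ε) : a • t = ε a • t := rfl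

lemma map_eq_zero {ι : Type*} [Finite ι] (f : (ι → A) →ₗ[A] TrivialModule ε) {a : ι → A}
    (ha : ∀ i, ε (a i) = 0) : f a = 0 := by
  classical
  have := Fintype.ofFinite ι
  rw [f.pi_apply_eq_sum_univ]
  exact Finset.sum_eq_zero fun i _ => by rw [smul_eq, ha, zero_smul]

/-- Evaluation at `v`, as a `k`-linear map on the space of `A`-linear maps to the trivial module. -/
noncomputable def evalAt {M : ModuleCat A} (v : M) :
    (M ⟶ ModuleCat.of A (TrivialModule ε)) →ₗ[k] TrivialModule ε where
  toFun f := f.hom v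
  map_add' _ _ := rfl
  map_smul' c f := by
    change ε (algebraMap k A c) • f.hom v = c • f.hom v
    rw [ε.commutes, Algebra.algebraMap_self_apply]

end TrivialModule

lemma extDim_eq_finrank_ext {A : Type} [Ring A] [Algebra ℂ A] (ε : A →ₐ[ℂ] ℂ) (n : ℕ) :
    extDim A ε n = Module.finrank ℂ (((Ext ℂ (ModuleCat A) n).obj
      (Opposite.op (ModuleCat.of A (TrivialModule ε)))).obj
        (ModuleCat.of A (TrivialModule ε))) := rfl

end TrivialModule

/-! ### Linear maps on a product of two coordinate modules -/

section ProdPi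

variable {A ι κ N : Type*} [Ring A] [AddCommGroup N] [Module A N]

/-- The linear map from the free module `(ι → A) × (κ → A)` with prescribed values on the standard
basis. -/
def prodPiLift [Fintype ι] [Fintype κ] (c : ι → N) (c' : κ → N) : (ι → A) × (κ → A) →ₗ[A] N :=
  (Fintype.linearCombination A c).coprod (Fintype.linearCombination A c')

lemma prodPi_hom_ext [Finite ι] [Finite κ] [DecidableEq ι] [DecidableEq κ]
    {f g : (ι → A) × (κ → A) →ₗ[A] N}
    (left : ∀ i, f (Pi.single i 1, 0) = g (Pi.single i 1, 0))
    (right : ∀ j, f (0, Pi.single j 1) = g (0, Pi.single j 1)) : f = g :=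
  LinearMap.prod_ext (LinearMap.pi_ext' fun i => LinearMap.ext_ring (left i))
    (LinearMap.pi_ext' fun j => LinearMap.ext_ring (right j))

lemma prodPiLift_single_left [Fintype ι] [Fintype κ] [DecidableEq ι] (c : ι → N) (c' : κ → N)
    (i : ι) : prodPiLift c c' ((Pi.single i 1, 0) : (ι → A) × (κ → A)) = c i := by
  rw [prodPiLift, LinearMap.coprod_apply, map_zero, add_zero,
    Fintype.linearCombination_apply_single, one_smul]

lemma prodPiLift_single_right [Fintype ι] [Fintype κ] [DecidableEq κ] (c : ι → N) (c' : κ → N)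
    (j : κ) : prodPiLift c c' ((0, Pi.single j 1) : (ι → A) × (κ → A)) = c' j := by
  rw [prodPiLift, LinearMap.coprod_apply, map_zero, zero_add,
    Fintype.linearCombination_apply_single, one_smul]

end ProdPi

/-! ### Mapping cones and Koszul complexes -/

section Cone

variable {A : Type*} [Ring A] {F : ℕ → Type*} [∀ n, AddCommGroup (F n)] [∀ n, Module A (F n)]
  (d : ∀ n, F (n + 1) →ₗ[A] F n) (u : ∀ n, F n →ₗ[A] F n)

/-- The differential of the mapping cone of an endomorphism `u` of the complex `(F, d)`. The cone
is truncated: its `n`-th term is `F (n + 1) × F n`, and the copy of `F 0` in degree `-1` is left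
out. -/
def coneDiff (n : ℕ) : F (n + 2) × F (n + 1) →ₗ[A] F (n + 1) × F n :=
  LinearMap.prod ((d (n + 1)).coprod (u (n + 1))) (-(d n ∘ₗ LinearMap.snd A _ _))

variable {d u}

lemma coneDiff_apply (n : ℕ) (a : F (n + 2)) (b : F (n + 1)) :
    coneDiff d u n (a, b) = (d (n + 1) a + u (n + 1) b, -d n b) := rfl

lemma coneDiff_coneDiff (hd : ∀ n a, d n (d (n + 1) a) = 0)
    (hdu : ∀ n a, d n (u (n + 1) a) = u n (d n a)) (n : ℕ) (v : F (n + 3) × F (n + 2)) :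
    coneDiff d u n (coneDiff d u (n + 1) v) = 0 := by
  obtain ⟨a, b⟩ := v
  simp only [coneDiff_apply, map_add, map_neg, hd, hdu, zero_add, add_neg_cancel, neg_neg,
    Prod.mk_zero_zero]

lemma exact_coneDiff (hd : ∀ n a, d n (d (n + 1) a) = 0)
    (hdu : ∀ n a, d n (u (n + 1) a) = u n (d n a)) (n : ℕ)
    (u_injective : Function.Injective (u (n + 1)))
    (exact_mod_u : ∀ a b, d (n + 1) a = u (n + 1) b → ∃ t s, d (n + 2) t + u (n + 2) s = a) :
    Function.Exact (coneDiff d u (n + 1)) (coneDiff d u n) := by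
  rintro ⟨a, b⟩
  refine ⟨fun h => ?_, fun ⟨v, hv⟩ => hv ▸ coneDiff_coneDiff hd hdu n v⟩
  rw [coneDiff_apply, Prod.mk_eq_zero] at h
  obtain ⟨t, s, rfl⟩ := exact_mod_u a (-b) (by rw [map_neg]; exact eq_neg_of_add_eq_zero_left h.1)
  have u_eq_zero : u (n + 1) (d (n + 1) s + b) = 0 := by
    simpa only [map_add, hd, hdu, zero_add] using h.1
  have hb : d (n + 1) s + b = 0 := u_injective (u_eq_zero.trans (map_zero _).symm)
  exact ⟨(t, s), by rw [coneDiff_apply, neg_eq_of_add_eq_zero_right hb]⟩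

end Cone

section Koszul

variable {A : Type*} [Ring A]

/-- The differential of the minimal resolution over the truncated polynomial ring in the square-zero
variables `y` and `z`, with coefficients extended to `A`: the tensor product of the two periodic
resolutions `⋯ → A → A → A` given by `y` and by `z`. The `i`-th coordinate in `Fin (n + 1) → A`
belongs to the tensor product of the degree `i` part of the former with the degree `n - i` part
of the latter. The complex is shifted by one, so that `Fin 0 → A` follows the term of degree `0`. -/
def koszulDiff (y z : A) (n : ℕ) : (Fin (n + 1) → A) →ₗ[A] (Fin n → A) :=
  LinearMap.pi fun i => LinearMap.toSpanSingleton A A y ∘ₗ LinearMap.proj i.succ +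
    LinearMap.toSpanSingleton A A ((-1 : ℤ) ^ (i : ℕ) • z) ∘ₗ LinearMap.proj i.castSucc

/-- Right multiplication of the `i`-th coordinate by `w i`. -/
def mulRightDiag (w : ℕ → A) (n : ℕ) : (Fin n → A) →ₗ[A] (Fin n → A) :=
  LinearMap.pi fun i => LinearMap.toSpanSingleton A A (w i) ∘ₗ LinearMap.proj i

lemma koszulDiff_apply (y z : A) (n : ℕ) (a : Fin (n + 1) → A) (i : Fin n) :
    koszulDiff y z n a i = a i.succ * y + (-1 : ℤ) ^ (i : ℕ) • (a i.castSucc * z) := by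
  simp only [← mul_smul_comm]
  rfl

lemma mulRightDiag_apply (w : ℕ → A) (n : ℕ) (a : Fin n → A) (i : Fin n) :
    mulRightDiag w n a i = a i * w i := rfl

lemma mulRightDiag_single (w : ℕ → A) (n : ℕ) (i : Fin n) :
    mulRightDiag w n (Pi.single i 1) = w i • Pi.single i 1 := by
  ext j
  obtain rfl | hj := eq_or_ne j i <;> simp [mulRightDiag_apply, *]

lemma koszulDiff_koszulDiff {y z : A} (hyz : Commute y z) (hy : y * y = 0) (hz : z * z = 0)
    (n : ℕ) (a : Fin (n + 2) → A) : koszulDiff y z n (koszulDiff y z (n + 1) a) = 0 := by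
  ext i
  simp only [koszulDiff_apply, add_mul, smul_mul_assoc, mul_assoc, hy, hz, hyz.eq, smul_add,
    Fin.val_succ, Fin.val_castSucc, Fin.succ_castSucc, mul_zero, smul_zero, pow_succ, Pi.zero_apply]
  module

lemma koszulDiff_mulRightDiag {y z : A} {w : ℕ → A} (hy : ∀ i, w (i + 1) * y = y * w i)
    (hz : ∀ i, Commute (w i) z) (n : ℕ) (a : Fin (n + 1) → A) :
    koszulDiff y z n (mulRightDiag w (n + 1) a) = mulRightDiag w n (koszulDiff y z n a) := by
  ext i
  simp only [koszulDiff_apply, mulRightDiag_apply, Fin.val_succ, Fin.val_castSucc, add_mul,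
    smul_mul_assoc, mul_assoc, hy, (hz _).eq]

end Koszul

/-! ### Normal forms -/

open Polynomial

lemma semiconjBy_aeval {k A : Type*} [CommSemiring k] [Semiring A] [Algebra k A] {a x y : A}
    (h : SemiconjBy a x y) (p : k[X]) : SemiconjBy a (aeval x p) (aeval y p) := by
  induction p using Polynomial.induction_on' with
  | add p q hp hq => simpa only [map_add] using hp.add_right hq
  | monomial n c =>
    simp only [aeval_monomial]
    exact SemiconjBy.mul_right (Algebra.commutes c a).symm (h.pow_right n)

/-- The quotient of the free algebra on `e₁, e₂, e₃` by the relations `CRel`. -/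
abbrev R : Type := RingQuot CRel

/-- The image in `R` of a generator of the free algebra. -/
noncomputable def gen (i : Fin 3) : R := RingQuot.mkAlgHom ℂ CRel (ι ℂ i)

local notation "e₁" => gen 0
local notation "e₂" => gen 1
local notation "e₃" => gen 2

lemma e₁_mul_e₂ : e₁ * e₂ = e₂ * (e₁ + 1) := by
  have h := RingQuot.mkAlgHom_rel ℂ CRel.r12
  simp only [map_sub, map_mul] at h
  rw [mul_add_one]
  exact sub_eq_iff_eq_add'.1 h

lemma commute_e₁_e₃ : Commute e₁ e₃ := by
  have h := RingQuot.mkAlgHom_rel ℂ CRel.r13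
  simp only [map_sub, map_mul, map_zero] at h
  exact sub_eq_zero.1 h

lemma commute_e₂_e₃ : Commute e₂ e₃ := by
  have h := RingQuot.mkAlgHom_rel ℂ CRel.r23
  simp only [map_sub, map_mul, map_zero] at h
  exact sub_eq_zero.1 h

lemma e₂_mul_e₂ : e₂ * e₂ = 0 := by
  have h := RingQuot.mkAlgHom_rel ℂ CRel.r22
  simp only [map_mul, map_zero] at h
  exact h

lemma e₃_mul_e₃ : e₃ * e₃ = 0 := by
  have h := RingQuot.mkAlgHom_rel ℂ CRel.r33
  simp only [map_mul, map_zero] at h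
  exact h

/-- The coefficients `(p, q, r, s)` of a normal form `p(e₁) + e₂ q(e₁) + e₃ r(e₁) + e₂ e₃ s(e₁)`. -/
abbrev NormalForm : Type := ℂ[X] × ℂ[X] × ℂ[X] × ℂ[X]

/-- The element of `R` with a given normal form. -/
noncomputable def ofNormalForm : NormalForm →ₗ[ℂ] R where
  toFun p := aeval e₁ p.1 + e₂ * aeval e₁ p.2.1 + e₃ * aeval e₁ p.2.2.1 +
    e₂ * e₃ * aeval e₁ p.2.2.2
  map_add' p q := by simp only [Prod.fst_add, Prod.snd_add, map_add, mul_add]; abel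
  map_smul' c p := by
    simp only [Prod.smul_fst, Prod.smul_snd, map_smul, mul_smul_comm, smul_add, RingHom.id_apply]

lemma ofNormalForm_apply (p : NormalForm) : ofNormalForm p =
    aeval e₁ p.1 + e₂ * aeval e₁ p.2.1 + e₃ * aeval e₁ p.2.2.1 + e₂ * e₃ * aeval e₁ p.2.2.2 := rfl

/-- Left multiplication by `gen i`, computed on normal forms. -/
noncomputable def genAction : Fin 3 → Module.End ℂ NormalForm :=
  ![{ toFun := fun p => (X * p.1, (X + 1) * p.2.1, X * p.2.2.1, (X + 1) * p.2.2.2)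
      map_add' := fun p q => by simp [mul_add]
      map_smul' := fun c p => by simp },
    { toFun := fun p => (0, p.1, 0, p.2.2.1)
      map_add' := fun p q => by simp
      map_smul' := fun c p => by simp },
    { toFun := fun p => (0, 0, p.1, p.2.1)
      map_add' := fun p q => by simp
      map_smul' := fun c p => by simp }]

lemma genAction_zero (p : NormalForm) :
    genAction 0 p = (X * p.1, (X + 1) * p.2.1, X * p.2.2.1, (X + 1) * p.2.2.2) := rfl

lemma genAction_one (p : NormalForm) : genAction 1 p = (0, p.1, 0, p.2.2.1) := rfl

lemma genAction_two (p : NormalForm) : genAction 2 p = (0, 0, p.1, p.2.1) := rfl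

lemma lift_genAction_eq_of_rel {a b : FreeAlgebra ℂ (Fin 3)} (h : CRel a b) :
    FreeAlgebra.lift ℂ genAction a = FreeAlgebra.lift ℂ genAction b := by
  refine LinearMap.ext fun p => ?_
  cases h <;>
    simp only [map_sub, map_mul, map_zero, FreeAlgebra.lift_ι_apply, LinearMap.sub_apply,
      Module.End.mul_apply, genAction_zero, genAction_one, genAction_two, LinearMap.zero_apply,
      Prod.mk_sub_mk, mul_zero, sub_self, Prod.mk_zero_zero, add_one_mul, add_sub_cancel_left]

/-- The regular representation of `R`, on normal forms. -/
noncomputable def normalFormRep : R →ₐ[ℂ] Module.End ℂ NormalForm :=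
  RingQuot.liftAlgHom ℂ ⟨FreeAlgebra.lift ℂ genAction, fun _ _ => lift_genAction_eq_of_rel⟩

lemma normalFormRep_gen (i : Fin 3) : normalFormRep (gen i) = genAction i := by
  simp only [normalFormRep, gen, RingQuot.liftAlgHom_mkAlgHom_apply, FreeAlgebra.lift_ι_apply]

lemma gen_mul_ofNormalForm (i : Fin 3) (p : NormalForm) :
    gen i * ofNormalForm p = ofNormalForm (genAction i p) := by
  fin_cases i
  · simp only [ofNormalForm_apply, Fin.zero_eta, genAction_zero, map_mul, map_add, map_one, aeval_X,
      mul_add, ← mul_assoc, e₁_mul_e₂, commute_e₁_e₃.eq]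
    simp only [mul_assoc, commute_e₁_e₃.eq, add_mul, one_mul]
  · simp only [ofNormalForm_apply, Fin.mk_one, genAction_one, map_zero, mul_add, ← mul_assoc,
      e₂_mul_e₂, zero_mul, mul_zero, add_zero, zero_add]
  · simp only [ofNormalForm_apply, Fin.reduceFinMk, genAction_two, map_zero, mul_add, ← mul_assoc,
      ← commute_e₂_e₃.eq, e₃_mul_e₃, mul_assoc _ e₃ e₃, zero_mul, mul_zero, add_zero, zero_add]

lemma mul_ofNormalForm (r : R) (p : NormalForm) :
    r * ofNormalForm p = ofNormalForm (normalFormRep r p) := by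
  obtain ⟨f, rfl⟩ := RingQuot.mkAlgHom_surjective ℂ CRel r
  induction f using FreeAlgebra.induction generalizing p with
  | grade0 c => rw [AlgHom.commutes, AlgHom.commutes, Module.algebraMap_end_apply, map_smul,
      Algebra.smul_def]
  | grade1 i => exact (gen_mul_ofNormalForm i p).trans (by rw [← normalFormRep_gen, gen])
  | mul a b ha hb => rw [map_mul, map_mul, mul_assoc, hb, ha, Module.End.mul_apply]
  | add a b ha hb => rw [map_add, map_add, add_mul, hb, ha, LinearMap.add_apply, map_add]

lemma ofNormalForm_normalFormRep_one (r : R) :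
    ofNormalForm (normalFormRep r (1, 0, 0, 0)) = r := by
  rw [← mul_ofNormalForm]
  simp [ofNormalForm_apply]

lemma normalFormRep_aeval_e₁ (p q : ℂ[X]) :
    normalFormRep (aeval e₁ p) (q, 0, 0, 0) = (p * q, 0, 0, 0) := by
  rw [← aeval_algHom_apply, normalFormRep_gen]
  induction p using Polynomial.induction_on' with
  | add p p' hp hp' => simp [hp, hp', add_mul]
  | monomial n c =>
    induction n with
    | zero => simp [← C_mul', Module.algebraMap_end_apply]
    | succ n ih =>
      rw [← monomial_mul_X, mul_comm, map_mul, Module.End.mul_apply, ih, aeval_X, genAction_zero]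
      simp only [mul_zero, mul_assoc]

lemma normalFormRep_ofNormalForm_one (p : NormalForm) :
    normalFormRep (ofNormalForm p) (1, 0, 0, 0) = p := by
  simp [ofNormalForm_apply, normalFormRep_aeval_e₁, normalFormRep_gen, genAction_one, genAction_two]

/-- The Poincaré–Birkhoff–Witt theorem for `R`: every element has a unique normal form. -/
noncomputable def normalFormEquiv : NormalForm ≃ₗ[ℂ] R where
  __ := ofNormalForm
  invFun r := normalFormRep r (1, 0, 0, 0)
  left_inv := normalFormRep_ofNormalForm_one
  right_inv := ofNormalForm_normalFormRep_one

lemma normalFormEquiv_apply (p : NormalForm) : normalFormEquiv p =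
    aeval e₁ p.1 + e₂ * aeval e₁ p.2.1 + e₃ * aeval e₁ p.2.2.1 + e₂ * e₃ * aeval e₁ p.2.2.2 := rfl

lemma normalFormEquiv_mul_aeval_e₁ (p : NormalForm) (q : ℂ[X]) :
    normalFormEquiv p * aeval e₁ q = normalFormEquiv (q • p) := by
  simp only [normalFormEquiv_apply, Prod.smul_fst, Prod.smul_snd, smul_eq_mul, mul_comm q, map_mul,
    add_mul, mul_assoc]

lemma normalFormEquiv_mul_e₂ (p : NormalForm) : normalFormEquiv p * e₂ =
    normalFormEquiv (0, p.1.comp (X + 1), 0, p.2.2.1.comp (X + 1)) := by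
  have aeval_mul_e₂ (q : ℂ[X]) : aeval e₁ q * e₂ = e₂ * aeval e₁ (q.comp (X + 1)) := by
    rw [aeval_comp, map_add, map_one, aeval_X]
    exact (semiconjBy_aeval e₁_mul_e₂.symm q).eq.symm
  have e₂_mul_e₂_mul (r : R) : e₂ * (e₂ * r) = 0 := by rw [← mul_assoc, e₂_mul_e₂, zero_mul]
  simp only [normalFormEquiv_apply, add_mul, mul_assoc, aeval_mul_e₂, commute_e₂_e₃.left_comm,
    e₂_mul_e₂_mul, map_zero, mul_zero, add_zero, zero_add]

lemma normalFormEquiv_mul_e₃ (p : NormalForm) :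
    normalFormEquiv p * e₃ = normalFormEquiv (0, 0, p.1, p.2.1) := by
  have aeval_mul_e₃ (q : ℂ[X]) : aeval e₁ q * e₃ = e₃ * aeval e₁ q :=
    (semiconjBy_aeval commute_e₁_e₃.symm q).eq.symm
  have e₃_mul_e₃_mul (r : R) : e₃ * (e₃ * r) = 0 := by rw [← mul_assoc, e₃_mul_e₃, zero_mul]
  simp only [normalFormEquiv_apply, add_mul, mul_assoc, aeval_mul_e₃, e₃_mul_e₃_mul, map_zero,
    mul_zero, add_zero, zero_add]

/-! ### Reduction modulo `e₁ - i` -/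

lemma eq_zero_of_mul_aeval_e₁_eq_zero {q : ℂ[X]} (hq : q ≠ 0) {r : R} (h : r * aeval e₁ q = 0) :
    r = 0 := by
  obtain ⟨p, rfl⟩ := normalFormEquiv.surjective r
  rw [normalFormEquiv_mul_aeval_e₁, LinearEquiv.map_eq_zero_iff] at h
  rw [(smul_eq_zero.1 h).resolve_left hq, map_zero]

/-- The element `e₁ - i`, the multiplier in the resolution at basis elements of degree `i` in `e₂`.
The shift by `i` makes these multiplications commute with the Koszul differential, as
`e₁ e₂ = e₂ (e₁ + 1)`. -/
noncomputable def weight (i : ℕ) : R := e₁ - (i : R)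

lemma aeval_e₁_X_sub_C (i : ℕ) : aeval e₁ (X - C (i : ℂ)) = weight i := by
  rw [map_sub, aeval_X, aeval_C, map_natCast, weight]

lemma weight_succ_mul_e₂ (i : ℕ) : weight (i + 1) * e₂ = e₂ * weight i := by
  rw [weight, weight, sub_mul, mul_sub, e₁_mul_e₂, (Nat.cast_commute _ _).eq, ← mul_sub,
    Nat.cast_succ, add_sub_add_right_eq_sub, mul_sub]

lemma commute_weight_e₃ (i : ℕ) : Commute (weight i) e₃ :=
  commute_e₁_e₃.sub_left (Nat.cast_commute i e₃)

/-- The class of an element in `R / R (e₁ - i)`, in the basis `1, e₂, e₃, e₂ e₃` of this quotient: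
the values at `i` of the coefficients of the normal form. -/
noncomputable def residue (i : ℕ) : R →ₗ[ℂ] ℂ × ℂ × ℂ × ℂ :=
  (leval (i : ℂ)).prodMap ((leval (i : ℂ)).prodMap ((leval (i : ℂ)).prodMap (leval (i : ℂ)))) ∘ₗ
    normalFormEquiv.symm.toLinearMap

lemma residue_normalFormEquiv (i : ℕ) (p : NormalForm) : residue i (normalFormEquiv p) =
    (p.1.eval (i : ℂ), p.2.1.eval (i : ℂ), p.2.2.1.eval (i : ℂ), p.2.2.2.eval (i : ℂ)) := by
  rw [residue, LinearMap.comp_apply, LinearEquiv.coe_coe, LinearEquiv.symm_apply_apply]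
  rfl

lemma residue_surjective (i : ℕ) : Function.Surjective (residue i) := fun v =>
  ⟨normalFormEquiv (C v.1, C v.2.1, C v.2.2.1, C v.2.2.2), by
    simp only [residue_normalFormEquiv, eval_C]⟩

lemma residue_mul_weight (i : ℕ) (r : R) : residue i (r * weight i) = 0 := by
  obtain ⟨p, rfl⟩ := normalFormEquiv.surjective r
  rw [← aeval_e₁_X_sub_C, normalFormEquiv_mul_aeval_e₁, residue_normalFormEquiv]
  simp

lemma exists_mul_weight_eq {i : ℕ} {r : R} (h : residue i r = 0) : ∃ s, s * weight i = r := by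
  obtain ⟨⟨p₁, p₂, p₃, p₄⟩, rfl⟩ := normalFormEquiv.surjective r
  simp only [residue_normalFormEquiv, Prod.mk_eq_zero, ← IsRoot.def, ← dvd_iff_isRoot] at h
  obtain ⟨⟨q₁, rfl⟩, ⟨q₂, rfl⟩, ⟨q₃, rfl⟩, ⟨q₄, rfl⟩⟩ := h
  exact ⟨normalFormEquiv (q₁, q₂, q₃, q₄), by
    rw [← aeval_e₁_X_sub_C, normalFormEquiv_mul_aeval_e₁]; rfl⟩

lemma residue_mul_e₂ (i : ℕ) (r : R) : residue i (r * e₂) =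
    (0, (residue (i + 1) r).1, 0, (residue (i + 1) r).2.2.1) := by
  obtain ⟨p, rfl⟩ := normalFormEquiv.surjective r
  simp [normalFormEquiv_mul_e₂, residue_normalFormEquiv]

lemma residue_mul_e₃ (i : ℕ) (r : R) : residue i (r * e₃) =
    (0, 0, (residue i r).1, (residue i r).2.1) := by
  obtain ⟨p, rfl⟩ := normalFormEquiv.surjective r
  simp [normalFormEquiv_mul_e₃, residue_normalFormEquiv]

lemma mulRightDiag_weight_injective (n : ℕ) : Function.Injective (mulRightDiag weight n) := by
  refine (injective_iff_map_eq_zero _).2 fun a ha => funext fun i => ?_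
  refine eq_zero_of_mul_aeval_e₁_eq_zero (X_sub_C_ne_zero ((i : ℕ) : ℂ)) ?_
  rw [aeval_e₁_X_sub_C]
  exact congrFun ha i

lemma residue_mulRightDiag_weight {n : ℕ} (a : Fin n → R) (i : Fin n) :
    residue i (mulRightDiag weight n a i) = 0 :=
  residue_mul_weight i (a i)

lemma exists_mulRightDiag_weight_eq {n : ℕ} {a : Fin n → R}
    (ha : ∀ i : Fin n, residue i (a i) = 0) : ∃ s, mulRightDiag weight n s = a := by
  choose s hs using fun i => exists_mul_weight_eq (ha i)
  exact ⟨s, funext hs⟩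

lemma residue_koszulDiff {n : ℕ} (a : Fin (n + 1) → R) (i : Fin n) :
    residue i (koszulDiff e₂ e₃ n a i) =
      (0, (residue (i + 1) (a i.succ)).1, (-1 : ℤ) ^ (i : ℕ) • (residue i (a i.castSucc)).1,
        (residue (i + 1) (a i.succ)).2.2.1 +
          (-1 : ℤ) ^ (i : ℕ) • (residue i (a i.castSucc)).2.1) := by
  rw [koszulDiff_apply, map_add, map_zsmul, residue_mul_e₂, residue_mul_e₃]
  simp only [Prod.smul_mk, Prod.mk_add_mk, smul_zero, add_zero, zero_add]

lemma exists_koszulDiff_add_mulRightDiag_eq {n : ℕ} {a : Fin (n + 1) → R}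
    (fst_eq_zero : ∀ i : Fin (n + 1), (residue i (a i)).1 = 0)
    (add_eq_zero : ∀ i : Fin n, (residue (i + 1) (a i.succ)).2.2.1 +
      (-1 : ℤ) ^ (i : ℕ) • (residue i (a i.castSucc)).2.1 = 0) :
    ∃ t s, koszulDiff e₂ e₃ (n + 1) t + mulRightDiag weight (n + 1) s = a := by
  choose lift residue_lift using residue_surjective
  -- `t` solves, coordinate by coordinate, the equations that `residue_koszulDiff` imposes.
  let t : Fin (n + 2) → R := Fin.cons (lift 0 ((residue 0 (a 0)).2.2.1, 0, 0, 0)) fun i =>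
    lift (i + 1) ((residue i (a i)).2.1, 0, (residue i (a i)).2.2.2, 0)
  have residue_t_zero : residue 0 (t 0) = ((residue 0 (a 0)).2.2.1, 0, 0, 0) := residue_lift _ _
  have residue_t_succ (i : Fin (n + 1)) :
      residue (i + 1) (t i.succ) = ((residue i (a i)).2.1, 0, (residue i (a i)).2.2.2, 0) :=
    residue_lift _ _
  have residue_koszulDiff_t (i : Fin (n + 1)) :
      residue i (koszulDiff e₂ e₃ (n + 1) t i) = residue i (a i) := by
    rw [residue_koszulDiff, residue_t_succ]
    cases i using Fin.cases with
    | zero => exact Prod.ext (fst_eq_zero 0).symm (by simp [residue_t_zero])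
    | succ i =>
      have residue_t_castSucc : residue (i.succ : Fin _) (t i.succ.castSucc) = _ :=
        residue_t_succ i.castSucc
      rw [residue_t_castSucc, smul_zero, add_zero, Fin.val_succ, pow_succ, mul_neg_one, neg_smul]
      exact Prod.ext (fst_eq_zero i.succ).symm (Prod.ext rfl
        (Prod.ext (neg_eq_of_add_eq_zero_left (add_eq_zero i)) rfl))
  obtain ⟨s, hs⟩ := exists_mulRightDiag_weight_eq (a := a - koszulDiff e₂ e₃ (n + 1) t) fun i => by
    rw [Pi.sub_apply, map_sub, residue_koszulDiff_t, sub_self]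
  exact ⟨t, s, by rw [hs, add_sub_cancel]⟩

/-! ### The resolution of the trivial module -/

/-- The `n`-th term of the resolution of the trivial module. -/
abbrev Term (n : ℕ) : Type := (Fin (n + 1) → R) × (Fin n → R)

/-- The differential of the resolution of the trivial module: the cone of right multiplication by
the weights on the Koszul complex of `e₂` and `e₃`. -/
noncomputable def diff (n : ℕ) : Term (n + 1) →ₗ[R] Term n :=
  coneDiff (koszulDiff e₂ e₃) (mulRightDiag weight) n

lemma diff_apply (n : ℕ) (a : Fin (n + 2) → R) (b : Fin (n + 1) → R) : diff n (a, b) =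
    (koszulDiff e₂ e₃ (n + 1) a + mulRightDiag weight (n + 1) b, -koszulDiff e₂ e₃ n b) := rfl

lemma exact_diff (n : ℕ) : Function.Exact (diff (n + 1)) (diff n) := by
  refine exact_coneDiff (koszulDiff_koszulDiff commute_e₂_e₃ e₂_mul_e₂ e₃_mul_e₃)
    (koszulDiff_mulRightDiag weight_succ_mul_e₂ commute_weight_e₃) n
    (mulRightDiag_weight_injective _) fun a b h => ?_
  have residue_eq_zero (i : Fin (n + 1)) := residue_koszulDiff a i
  simp only [h, residue_mulRightDiag_weight, eq_comm (a := (0 : ℂ × ℂ × ℂ × ℂ)), Prod.mk_eq_zero,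
    true_and] at residue_eq_zero
  refine exists_koszulDiff_add_mulRightDiag_eq (fun i => ?_) fun i => (residue_eq_zero i).2.2
  cases i using Fin.cases with
  | zero => simpa using (residue_eq_zero 0).2.1
  | succ i => exact (residue_eq_zero i).1

section Augmentation

variable {ε : R →ₐ[ℂ] ℂ}

lemma eps_eq_residue_fst (hε : ∀ i, ε (gen i) = 0) (r : R) : ε r = (residue 0 r).1 := by
  obtain ⟨p, rfl⟩ := normalFormEquiv.surjective r
  have ε_aeval_e₁ (q : ℂ[X]) : ε (aeval e₁ q) = q.eval 0 := by
    rw [← aeval_algHom_apply, hε, coe_aeval_eq_eval]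
  rw [residue_normalFormEquiv, normalFormEquiv_apply]
  simp [ε_aeval_e₁, hε]

lemma eps_weight (hε : ∀ i, ε (gen i) = 0) (i : ℕ) : ε (weight i) = -(i : ℂ) := by
  rw [weight, map_sub, hε, map_natCast, zero_sub]

lemma eps_koszulDiff (hε : ∀ i, ε (gen i) = 0) {n : ℕ} (a : Fin (n + 1) → R)
    (i : Fin n) : ε (koszulDiff e₂ e₃ n a i) = 0 := by
  rw [koszulDiff_apply, map_add, map_zsmul, map_mul, map_mul, hε, hε, mul_zero, mul_zero, smul_zero,
    add_zero]

variable (ε) in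
/-- The augmentation of the resolution of the trivial module. -/
noncomputable def augmentation : Term 0 →ₗ[R] TrivialModule ε :=
  LinearMap.toSpanSingleton R (TrivialModule ε) (1 : ℂ) ∘ₗ LinearMap.proj 0 ∘ₗ LinearMap.fst R _ _

lemma augmentation_apply (v : Term 0) : augmentation ε v = ε (v.1 0) := mul_one (ε (v.1 0))

lemma augmentation_surjective : Function.Surjective (augmentation ε) := fun c =>
  ⟨(fun _ => algebraMap ℂ R c, 0), (augmentation_apply _).trans (ε.commutes c)⟩

lemma exact_augmentation (hε : ∀ i, ε (gen i) = 0) :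
    Function.Exact (diff 0) (augmentation ε) := by
  rintro ⟨a, b⟩
  rw [augmentation_apply]
  constructor
  · intro h
    obtain ⟨t, s, rfl⟩ := exists_koszulDiff_add_mulRightDiag_eq (a := a)
      (fun i => by
        obtain rfl := Fin.fin_one_eq_zero i
        exact (eps_eq_residue_fst hε _).symm.trans h)
      (fun i => i.elim0)
    exact ⟨(t, s), Prod.ext rfl (Subsingleton.elim _ _)⟩
  · rintro ⟨⟨t, s⟩, h⟩
    obtain rfl := congrArg Prod.fst h
    change ε (koszulDiff e₂ e₃ 1 t 0 + s 0 * weight 0) = 0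
    rw [map_add, eps_koszulDiff hε, map_mul, eps_weight hε, Nat.cast_zero,
      neg_zero, mul_zero, add_zero]

/-! ### Cochains with values in the trivial module -/

lemma map_diff (hε : ∀ i, ε (gen i) = 0) {n : ℕ} (f : Term n →ₗ[R] TrivialModule ε)
    (a : Fin (n + 2) → R) (b : Fin (n + 1) → R) :
    f (diff n (a, b)) = f (mulRightDiag weight (n + 1) b, 0) := by
  have left_eq_zero : f (koszulDiff e₂ e₃ (n + 1) a, 0) = 0 :=
    TrivialModule.map_eq_zero (f ∘ₗ LinearMap.inl R _ _) (eps_koszulDiff hε a)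
  have right_eq_zero : f (0, koszulDiff e₂ e₃ n b) = 0 :=
    TrivialModule.map_eq_zero (f ∘ₗ LinearMap.inr R _ _) (eps_koszulDiff hε b)
  have diff_eq : diff n (a, b) = (koszulDiff e₂ e₃ (n + 1) a, 0) +
      (mulRightDiag weight (n + 1) b, 0) - (0, koszulDiff e₂ e₃ n b) := by
    simp [diff_apply]
  rw [diff_eq, map_sub, map_add, left_eq_zero, right_eq_zero, zero_add, sub_zero]

lemma map_diff_single_left (hε : ∀ i, ε (gen i) = 0) {n : ℕ} (f : Term n →ₗ[R] TrivialModule ε)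
    (i : Fin (n + 2)) : f (diff n (Pi.single i 1, 0)) = 0 := by
  rw [map_diff hε, map_zero, Prod.mk_zero_zero, map_zero]

lemma map_diff_single_right (hε : ∀ i, ε (gen i) = 0) {n : ℕ} (f : Term n →ₗ[R] TrivialModule ε)
    (i : Fin (n + 1)) :
    f (diff n (0, Pi.single i 1)) = -((i : ℕ) : ℂ) • f (Pi.single i 1, 0) := by
  rw [map_diff hε, mulRightDiag_single, ← eps_weight hε, ← TrivialModule.smul_eq, ← map_smul,
    Prod.smul_mk, smul_zero]

lemma comp_diff_eq_zero_iff (hε : ∀ i, ε (gen i) = 0) {n : ℕ} (f : Term n →ₗ[R] TrivialModule ε) :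
    f ∘ₗ diff n = 0 ↔ ∀ i ≠ 0, f (Pi.single i 1, 0) = 0 := by
  constructor
  · intro h i hi
    have smul_map_single_eq_zero : -((i : ℕ) : ℂ) • f (Pi.single i 1, 0) = 0 :=
      (map_diff_single_right hε f i).symm.trans (LinearMap.congr_fun h _)
    exact (smul_eq_zero.1 smul_map_single_eq_zero).resolve_left (by simpa using hi)
  · intro h
    refine prodPi_hom_ext (map_diff_single_left hε f) fun i => ?_
    refine (map_diff_single_right hε f i).trans ?_
    obtain rfl | hi := eq_or_ne i 0
    · simp
    · rw [h i hi, smul_zero]; rfl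

lemma exists_comp_diff_eq_iff (hε : ∀ i, ε (gen i) = 0) {n : ℕ}
    (f : Term (n + 1) →ₗ[R] TrivialModule ε) :
    (∃ g, g ∘ₗ diff n = f) ↔ (∀ i, f (Pi.single i 1, 0) = 0) ∧ f (0, Pi.single 0 1) = 0 := by
  constructor
  · rintro ⟨g, rfl⟩
    exact ⟨map_diff_single_left hε g, (map_diff_single_right hε g 0).trans (by simp)⟩
  · rintro ⟨left_eq_zero, right_eq_zero⟩
    let g : Term n →ₗ[R] TrivialModule ε :=
      prodPiLift (fun i => -((i : ℕ) : ℂ)⁻¹ • f (0, Pi.single i 1)) 0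
    refine ⟨g, prodPi_hom_ext
      (fun i => (map_diff_single_left hε g i).trans (left_eq_zero i).symm)
      fun i => (map_diff_single_right hε g i).trans ?_⟩
    obtain rfl | hi := eq_or_ne i 0
    · rw [right_eq_zero, Fin.val_zero, Nat.cast_zero, neg_zero, zero_smul]
    · have cast_ne_zero : ((i : ℕ) : ℂ) ≠ 0 := by simpa using hi
      rw [prodPiLift_single_left, smul_smul, neg_mul_neg, mul_inv_cancel₀ cast_ne_zero, one_smul]

lemma extDim_zero (hε : ∀ i, ε (gen i) = 0) : extDim R ε 0 = 1 := by
  rw [extDim_eq_finrank_ext, ← TrivialModule.finrank_eq_one ε]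
  refine finrank_ext_zero_eq_of_exact exact_diff (exact_augmentation hε) augmentation_surjective
    (TrivialModule.evalAt ((Pi.single 0 1, 0) : Term 0)) (fun w => ?_) fun f _ hf => ?_
  · exact ⟨prodPiLift (Pi.single 0 w) 0,
      (comp_diff_eq_zero_iff hε _).2 fun i hi => absurd (Fin.fin_one_eq_zero i) hi,
      (prodPiLift_single_left _ _ 0).trans (Pi.single_eq_same _ _)⟩
  · refine prodPi_hom_ext (fun i => ?_) fun i => i.elim0
    obtain rfl := Fin.fin_one_eq_zero i
    exact hf

lemma extDim_succ (hε : ∀ i, ε (gen i) = 0) (n : ℕ) : extDim R ε (n + 1) = 2 := by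
  have finrank_eq_two : Module.finrank ℂ (TrivialModule ε × TrivialModule ε) = 2 := by
    rw [Module.finrank_prod, TrivialModule.finrank_eq_one]
  rw [extDim_eq_finrank_ext, ← finrank_eq_two]
  refine finrank_ext_succ_eq_of_exact exact_diff (exact_augmentation hε) augmentation_surjective n
    ((TrivialModule.evalAt ((Pi.single 0 1, 0) : Term (n + 1))).prod
      (TrivialModule.evalAt ((0, Pi.single 0 1) : Term (n + 1)))) (fun w => ?_) fun f hf => ?_
  · refine ⟨prodPiLift (Pi.single 0 w.1) (Pi.single 0 w.2),
      (comp_diff_eq_zero_iff hε _).2 fun i hi => ?_, Prod.ext ?_ ?_⟩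
    · rw [prodPiLift_single_left, Pi.single_eq_of_ne hi]
    · exact (prodPiLift_single_left _ _ 0).trans (Pi.single_eq_same _ _)
    · exact (prodPiLift_single_right _ _ 0).trans (Pi.single_eq_same _ _)
  · rw [exists_comp_diff_eq_iff hε]
    refine Iff.trans (and_congr_left' ⟨fun h => h 0, fun h i => ?_⟩) Prod.mk_eq_zero.symm
    obtain rfl | hi := eq_or_ne i 0
    · exact h
    · exact (comp_diff_eq_zero_iff hε f).1 hf i hi

end Augmentation

lemma powerSeries_mk_mul_one_sub_X {k : Type*} [Ring k] {h : ℕ → k} (h_zero : h 0 = 1)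
    (h_succ : ∀ n, h (n + 1) = 2) :
    PowerSeries.mk h * (1 - PowerSeries.X) = 1 + PowerSeries.X := by
  ext n
  rw [mul_sub, mul_one, map_sub, map_add, PowerSeries.coeff_mk]
  match n with
  | 0 => simp [h_zero]
  | 1 => simp [h_zero, h_succ, PowerSeries.coeff_one, PowerSeries.coeff_succ_mul_X,
      ← one_add_one_eq_two]
  | n + 2 =>
    simp [h_succ, PowerSeries.coeff_one, PowerSeries.coeff_X, PowerSeries.coeff_succ_mul_X]

end ColorAlgebra

theorem betti_numbers (ε : RingQuot CRel →ₐ[ℂ] ℂ)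
    (hε : ∀ i : Fin 3, ε (RingQuot.mkAlgHom ℂ CRel (ι ℂ i)) = 0) :
    (extDim (RingQuot CRel) ε 0 = 1 ∧ ∀ n ≥ 1, extDim (RingQuot CRel) ε n = 2) ∧
    (PowerSeries.mk fun n => (extDim (RingQuot CRel) ε n : ℚ)) * (1 - PowerSeries.X) =
      1 + PowerSeries.X := by
  refine ⟨⟨ColorAlgebra.extDim_zero hε, fun n hn => ?_⟩,
    ColorAlgebra.powerSeries_mk_mul_one_sub_X ?_ fun n => ?_⟩
  · obtain ⟨n, rfl⟩ := Nat.exists_eq_add_of_le' hn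
    exact ColorAlgebra.extDim_succ hε n
  · rw [ColorAlgebra.extDim_zero hε, Nat.cast_one]
  · rw [ColorAlgebra.extDim_succ hε, Nat.cast_ofNat]
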